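/- Let G be a finite group, N a normal subgroup with Q = G/N cyclic generated by the coset of q ∈ G, and U a set of representatives of the Q̂-orbits on Irr G. For ρ ∈ U set m_ρ = ⟨Res_N ρ, Res_N ρ⟩. Suppose Θ is a character of G written as Θ = Σ_{ρ∈U} Ψ_ρ ⊗ ρ with each Ψ_ρ a character (or zero) of G trivial on N. Then for every ρ ∈ U and every integer d ≥ 0, Ψ_ρ(q^{d·m_ρ}) = (1/(#N · m_ρ)) Σ_{g ∈ q^{d·m_ρ}N} conj(ρ(g)) · Θ(g). -/

import Mathlib

open scoped BigOperators

/-- `ρ : G → ℂ` is the character of an irreducible (simple) finite-dimensional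
complex representation of `G`. -/
def IsIrrChar (G : Type) [Group G] (ρ : G → ℂ) : Prop :=
  ∃ V : FDRep ℂ G, CategoryTheory.Simple V ∧ ρ = V.character

/-- `Θ : G → ℂ` is the character of some finite-dimensional complex representation of `G`. -/
def IsChar (G : Type) [Group G] (Θ : G → ℂ) : Prop :=
  ∃ V : FDRep ℂ G, Θ = V.character

variable {G : Type} [Group G]

/-- The action of a character `χ ∈ Q̂` (where `Q = G ⧸ N`) on a function `ρ : G → ℂ`:
`(χ · ρ)(g) = χ(gN) · ρ(g)`. -/
def charMul (N : Subgroup G) [N.Normal] (χ : (G ⧸ N) →* ℂˣ) (ρ : G → ℂ) : G → ℂ :=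
  fun g => (χ (g : G ⧸ N) : ℂ) * ρ g

/-- The orbit of `ρ` under the tensoring action of `Q̂ = Hom(G ⧸ N, ℂˣ)`. -/
def qhatOrbit (N : Subgroup G) [N.Normal] (ρ : G → ℂ) : Set (G → ℂ) :=
  {ρ' | ∃ χ : (G ⧸ N) →* ℂˣ, ρ' = charMul N χ ρ}

/-- The coset `qN`, as a subset of `G`. -/
def coset (N : Subgroup G) [N.Normal] (q : G) : Set G :=
  {g | (g : G ⧸ N) = (q : G ⧸ N)}

/-- `C_q`: the set of conjugacy classes of `G` contained in the coset `qN`. -/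
def Cset (N : Subgroup G) [N.Normal] (q : G) : Set (ConjClasses G) :=
  {c | c.carrier ⊆ coset N q}

/-- `R_q`: the set of `Q̂`-orbits on the irreducible characters of `G`
containing a character not identically zero on `qN`. -/
def Rset (N : Subgroup G) [N.Normal] (q : G) : Set (Set (G → ℂ)) :=
  {S | (∃ ρ, IsIrrChar G ρ ∧ S = qhatOrbit N ρ) ∧ ∃ ρ' ∈ S, ∃ g ∈ coset N q, ρ' g ≠ 0}

/-- The class function `π_x` for `x ∈ Q = G ⧸ N`:
`π_x(g) = (1/#Q̂) ∑_{χ ∈ Q̂} conj(χ(x)) χ(gN)`. -/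
noncomputable def piQ (N : Subgroup G) [N.Normal] (x : G ⧸ N) : G → ℂ :=
  fun g => (Nat.card ((G ⧸ N) →* ℂˣ) : ℂ)⁻¹ *
    ∑ᶠ χ : (G ⧸ N) →* ℂˣ, (starRingEnd ℂ) (χ x : ℂ) * (χ (g : G ⧸ N) : ℂ)

/-- The space of class functions on `G`, as a submodule of `G → ℂ`. -/
noncomputable def classFunSubmodule (G : Type) [Group G] : Submodule ℂ (G → ℂ) where
  carrier := {f | ∀ g h : G, f (h * g * h⁻¹) = f g}
  add_mem' := by intro a b ha hb g h; simp only [Pi.add_apply, ha g h, hb g h]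
  zero_mem' := by intro g h; rfl
  smul_mem' := by intro c f hf g h; simp only [Pi.smul_apply, hf g h]

/-- The space of class functions on `G` vanishing outside the coset `qN`. -/
noncomputable def cosetClassFun (N : Subgroup G) [N.Normal] (q : G) : Submodule ℂ (G → ℂ) where
  carrier := {f | (∀ g h : G, f (h * g * h⁻¹) = f g) ∧ ∀ g, g ∉ coset N q → f g = 0}
  add_mem' := by
    intro a b ha hb
    exact ⟨fun g h => by simp only [Pi.add_apply, ha.1 g h, hb.1 g h],
      fun g hg => by simp only [Pi.add_apply, ha.2 g hg, hb.2 g hg, add_zero]⟩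
  zero_mem' := ⟨fun g h => rfl, fun g hg => rfl⟩
  smul_mem' := by
    intro c f hf
    exact ⟨fun g h => by simp only [Pi.smul_apply, hf.1 g h],
      fun g hg => by simp only [Pi.smul_apply, hf.2 g hg, smul_zero]⟩


/-!
Fourier inversion on the abelian group `Q = G ⧸ N` writes the indicator function of a coset `xN` as
an average of the characters `χ` of `Q`. For irreducible `ρ` and `σ`, Schur orthogonality on `G`
therefore gives `∑_{g ∈ xN} conj(ρ(g)) σ(g) = #N · ∑_{χ · σ = ρ} conj(χ(x))`. The right side is
empty unless `σ` lies in the orbit of `ρ`, and for `σ = ρ` it runs over the stabilizer of `ρ` in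
`Q̂`. At `x = 1` this says that `m_ρ` is the order of the stabilizer, so that every `χ` in the
stabilizer is trivial at `q ^ (d * m_ρ)`. Pairing `Θ` with `ρ` over this coset, where each `Ψ_σ` is
constant, thus isolates `#N · m_ρ · Ψ_ρ`.
-/

open scoped ComplexConjugate

section Unitarity

variable {𝕜 Γ : Type*} [RCLike 𝕜] [Group Γ] [Finite Γ]

open scoped ComplexOrder Matrix in
lemma exists_posDef_conjTranspose_mul_mul_eq {n : Type*} [Fintype n] [DecidableEq n]
    (M : Γ →* Matrix n n 𝕜) :
    ∃ H : Matrix n n 𝕜, H.PosDef ∧ ∀ γ, (M γ)ᴴ * H * M γ = H := by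
  classical
  cases nonempty_fintype Γ
  refine ⟨∑ γ, (M γ)ᴴ * M γ, ?_, fun γ => ?_⟩
  · rw [← Finset.add_sum_erase _ _ (Finset.mem_univ 1), map_one, Matrix.conjTranspose_one, mul_one]
    exact Matrix.PosDef.one.add_posSemidef
      (Matrix.posSemidef_sum _ fun γ _ => Matrix.posSemidef_conjTranspose_mul_self (M γ))
  · simp only [Finset.mul_sum, Finset.sum_mul]
    refine Fintype.sum_equiv (Equiv.mulRight γ) _ _ fun δ => ?_
    simp only [Equiv.coe_mulRight, map_mul, Matrix.conjTranspose_mul, Matrix.mul_assoc]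

open scoped ComplexOrder Matrix in
lemma conj_trace_map {n : Type*} [Fintype n] [DecidableEq n] (M : Γ →* Matrix n n 𝕜) (γ : Γ) :
    conj (M γ).trace = (M γ⁻¹).trace := by
  obtain ⟨H, hH, hinv⟩ := exists_posDef_conjTranspose_mul_mul_eq M
  have hdet : IsUnit H.det := (Matrix.isUnit_iff_isUnit_det H).1 hH.isUnit
  have hMM : M γ * M γ⁻¹ = 1 := by rw [← map_mul, mul_inv_cancel, map_one]
  calc conj (M γ).trace
      = ((M γ)ᴴ * H * (M γ * M γ⁻¹) * H⁻¹).trace := by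
        rw [hMM, mul_one, Matrix.mul_nonsing_inv_cancel_right _ _ hdet, Matrix.trace_conjTranspose]
        rfl
    _ = (H * M γ⁻¹ * H⁻¹).trace := by rw [← Matrix.mul_assoc, hinv γ]
    _ = (M γ⁻¹).trace := by
        rw [Matrix.trace_mul_comm, Matrix.nonsing_inv_mul_cancel_left _ _ hdet]

lemma conj_character {V : Type*} [AddCommGroup V] [Module 𝕜 V]
    [FiniteDimensional 𝕜 V] (ρ : Representation 𝕜 Γ V) (γ : Γ) :
    conj (ρ.character γ) = ρ.character γ⁻¹ := by
  let b := Module.finBasis 𝕜 V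
  let M : Γ →* Matrix _ _ 𝕜 := (LinearMap.toMatrixAlgEquiv b).toMulEquiv.toMonoidHom.comp ρ
  have hM (δ : Γ) : ρ.character δ = (M δ).trace := LinearMap.trace_eq_matrix_trace 𝕜 b (ρ δ)
  rw [hM, hM, conj_trace_map]

end Unitarity

section IrreducibleCharacters

variable {ρ σ : G → ℂ}

lemma IsIrrChar.conj_apply [Finite G] (hρ : IsIrrChar G ρ) (g : G) : conj (ρ g) = ρ g⁻¹ := by
  obtain ⟨V, -, rfl⟩ := hρ
  exact conj_character V.ρ g

open scoped Classical in
lemma IsIrrChar.sum_mul_conj [Fintype G] (hρ : IsIrrChar G ρ) (hσ : IsIrrChar G σ) :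
    ∑ g, ρ g * conj (σ g) = if ρ = σ then (Nat.card G : ℂ) else 0 := by
  have hG : (Nat.card G : ℂ) ≠ 0 := NeZero.ne _
  have := invertibleOfNonzero hG
  simp_rw [hσ.conj_apply]
  obtain ⟨V, hV, rfl⟩ := hρ
  obtain ⟨W, hW, rfl⟩ := hσ
  split_ifs with h
  · rw [← h]
    exact (FDRep.simple_iff_char_is_norm_one V).1 hV
  · have horth := FDRep.char_orthonormal V W
    rw [if_neg fun ⟨i⟩ => h (FDRep.char_iso i)] at horth
    exact (mul_eq_zero.1 horth).resolve_left (inv_ne_zero hG)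

variable (G) in
lemma finite_setOf_isIrrChar [Finite G] : {ρ | IsIrrChar G ρ}.Finite := by
  classical
  cases nonempty_fintype G
  have hinner (ρ σ : {ρ | IsIrrChar G ρ}) :
      inner ℂ (WithLp.toLp 2 σ.1) (WithLp.toLp 2 ρ.1) = if ρ.1 = σ.1 then (Nat.card G : ℂ) else 0 :=
    (EuclideanSpace.inner_toLp_toLp _ _).trans (ρ.2.sum_mul_conj σ.2)
  have hlin : LinearIndependent ℂ fun ρ : {ρ | IsIrrChar G ρ} => WithLp.toLp 2 ρ.1 := by
    refine linearIndependent_of_ne_zero_of_inner_eq_zero (fun ρ hρ => ?_) fun ρ σ hne =>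
      (hinner σ ρ).trans (if_neg fun h => hne (Subtype.ext h.symm))
    have hcard := hinner ρ ρ
    rw [hρ, inner_zero_left, if_pos rfl] at hcard
    exact NeZero.ne _ hcard.symm
  have := hlin.finite
  exact Set.toFinite _

end IrreducibleCharacters

section DualGroup

lemma conj_monoidHom_units_apply {A : Type*} [Group A] [Finite A] (χ : A →* ℂˣ) (a : A) :
    conj (χ a : ℂ) = χ a⁻¹ := by
  have hroot : χ a ∈ rootsOfUnity (Nat.card A) ℂ := by
    rw [mem_rootsOfUnity, ← map_pow, pow_card_eq_one', map_one]
  rw [Complex.conj_rootsOfUnity hroot, map_inv]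

open scoped Classical in
lemma finsum_monoidHom_units_apply {A R : Type*} [CommGroup A] [Finite A] [CommRing R] [IsDomain R]
    [HasEnoughRootsOfUnity R (Monoid.exponent A)] (a : A) :
    ∑ᶠ χ : A →* Rˣ, (χ a : R) = if a = 1 then (Nat.card A : R) else 0 := by
  cases nonempty_fintype (A →* Rˣ)
  have heval : (Units.coeHom R).comp (MonoidHom.eval a : (A →* Rˣ) →* Rˣ) = 1 ↔ a = 1 := by
    refine ⟨fun h => ?_, fun h => by ext; simp [h]⟩
    by_contra ha
    obtain ⟨χ, hχ⟩ := CommGroup.exists_apply_ne_one_of_hasEnoughRootsOfUnity A R ha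
    exact hχ (Units.ext (DFunLike.congr_fun h χ))
  have hsum := sum_hom_units ((Units.coeHom R).comp (MonoidHom.eval a : (A →* Rˣ) →* Rˣ))
  rw [Nat.cast_ite, Nat.cast_zero, ← Nat.card_eq_fintype_card,
    CommGroup.card_monoidHom_of_hasEnoughRootsOfUnity, if_congr heval rfl rfl] at hsum
  rw [finsum_eq_sum_of_fintype, ← hsum]
  rfl

lemma apply_pow_mul_natCard_eq_one {A M : Type*} [Monoid A] [CommGroup M] {S : Subgroup (A →* M)}
    {χ : A →* M} (hχ : χ ∈ S) (a : A) (d : ℕ) : χ (a ^ (d * Nat.card S)) = 1 := by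
  rw [mul_comm, pow_mul, map_pow, map_pow, ← MonoidHom.pow_apply,
    orderOf_dvd_iff_pow_eq_one.1 (S.orderOf_dvd_natCard hχ), MonoidHom.one_apply, one_pow]

open scoped Classical IsMulCommutative in
lemma piQ_mk_apply (N : Subgroup G) [N.Normal] [Finite (G ⧸ N)] [IsMulCommutative (G ⧸ N)]
    (x g : G) : piQ N x g = if g ∈ coset N x then 1 else 0 := by
  have hterm (χ : (G ⧸ N) →* ℂˣ) :
      conj (χ x : ℂ) * χ g = χ ((x : G ⧸ N)⁻¹ * g) := by
    rw [conj_monoidHom_units_apply, map_mul, Units.val_mul]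
  have hQ : (Nat.card (G ⧸ N) : ℂ) ≠ 0 := NeZero.ne _
  simp only [piQ, hterm, finsum_monoidHom_units_apply, inv_mul_eq_one,
    CommGroup.card_monoidHom_of_hasEnoughRootsOfUnity, mul_ite, inv_mul_cancel₀ hQ, mul_zero]
  exact if_congr eq_comm rfl rfl

end DualGroup

section Twisting

variable (N : Subgroup G) [N.Normal] {ρ : G → ℂ}

/-- The action `(χ, ρ) ↦ χ · ρ` of `Q̂` on functions on `G`, whose orbits are the sets
`qhatOrbit N ρ`; it makes stabilizers in `Q̂` available. -/
instance qhatMulAction : MulAction ((G ⧸ N) →* ℂˣ) (G → ℂ) where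
  smul := charMul N
  one_smul _ := funext fun _ => one_mul _
  mul_smul _ _ _ := funext fun _ => mul_assoc _ _ _

lemma qhatOrbit_eq_orbit (ρ : G → ℂ) :
    qhatOrbit N ρ = MulAction.orbit ((G ⧸ N) →* ℂˣ) ρ :=
  Set.ext fun _ => exists_congr fun _ => eq_comm

variable {N} in
open CategoryTheory MonoidalCategory in
lemma IsIrrChar.smul [Finite G] (hρ : IsIrrChar G ρ) (χ : (G ⧸ N) →* ℂˣ) :
    IsIrrChar G (χ • ρ) := by
  cases nonempty_fintype G
  obtain ⟨V, hV, rfl⟩ := hρ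
  let L : FDRep ℂ G := FDRep.of (((Algebra.lmul ℂ ℂ : ℂ →* Module.End ℂ ℂ).comp
    (Units.coeHom ℂ)).comp (χ.comp (QuotientGroup.mk' N)))
  have hL (g : G) : L.character g = χ g := Algebra.trace_self_apply (χ g : ℂ)
  have hLV : (L ⊗ V).character = χ • V.character := by
    ext g
    rw [FDRep.char_tensor, Pi.mul_apply, hL]
    rfl
  refine ⟨L ⊗ V, ?_, hLV.symm⟩
  rw [FDRep.simple_iff_char_is_norm_one, ← (FDRep.simple_iff_char_is_norm_one V).1 hV]
  refine Finset.sum_congr rfl fun g _ => ?_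
  rw [FDRep.char_tensor, Pi.mul_apply, Pi.mul_apply, mul_mul_mul_comm, hL, hL, ← Units.val_mul,
    ← map_mul, ← QuotientGroup.mk_mul, mul_inv_cancel, QuotientGroup.mk_one, map_one, Units.val_one,
    one_mul]

end Twisting

section CosetPairing

variable [Finite G] {N : Subgroup G} [N.Normal] [IsMulCommutative (G ⧸ N)] {ρ σ : G → ℂ}

open scoped IsMulCommutative in
lemma finsum_coset_conj_mul (hρ : IsIrrChar G ρ) (hσ : IsIrrChar G σ) (x : G) :
    ∑ᶠ g ∈ coset N x, conj (ρ g) * σ g =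
      Nat.card N * ∑ᶠ χ ∈ {χ : (G ⧸ N) →* ℂˣ | χ • σ = ρ}, conj (χ x : ℂ) := by
  classical
  cases nonempty_fintype G
  cases nonempty_fintype ((G ⧸ N) →* ℂˣ)
  have hQ : (Nat.card (G ⧸ N) : ℂ) ≠ 0 := NeZero.ne _
  calc ∑ᶠ g ∈ coset N x, conj (ρ g) * σ g
      = ∑ g, piQ N x g * (conj (ρ g) * σ g) := by
        rw [finsum_mem_def, finsum_eq_sum_of_fintype]
        simp only [piQ_mk_apply, Set.indicator_apply, ite_mul, one_mul, zero_mul]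
    _ = (Nat.card (G ⧸ N) : ℂ)⁻¹ *
          ∑ χ : (G ⧸ N) →* ℂˣ, conj (χ x : ℂ) * ∑ g, (χ • σ) g * conj (ρ g) := by
        simp only [piQ, finsum_eq_sum_of_fintype, Finset.mul_sum, Finset.sum_mul,
          CommGroup.card_monoidHom_of_hasEnoughRootsOfUnity]
        rw [Finset.sum_comm]
        refine Finset.sum_congr rfl fun χ _ => Finset.sum_congr rfl fun g _ => ?_
        change _ = _ * (_ * (χ g * σ g * _))
        ring
    _ = (Nat.card (G ⧸ N) : ℂ)⁻¹ *
          ((∑ χ : (G ⧸ N) →* ℂˣ, if χ • σ = ρ then conj (χ x : ℂ) else 0) * Nat.card G) := by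
        simp only [(hσ.smul _).sum_mul_conj hρ, Finset.sum_mul, mul_ite, mul_zero, ite_mul,
          zero_mul]
    _ = Nat.card N * ∑ᶠ χ ∈ {χ : (G ⧸ N) →* ℂˣ | χ • σ = ρ}, conj (χ x : ℂ) := by
        rw [finsum_mem_def, finsum_eq_sum_of_fintype, N.card_eq_card_quotient_mul_card_subgroup,
          Nat.cast_mul, mul_left_comm, inv_mul_cancel_left₀ hQ, mul_comm]
        simp only [Set.indicator_apply, Set.mem_ofPred_eq]

lemma finsum_coset_conj_mul_eq_zero (hρ : IsIrrChar G ρ) (hσ : IsIrrChar G σ)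
    (h : qhatOrbit N σ ≠ qhatOrbit N ρ) (x : G) :
    ∑ᶠ g ∈ coset N x, conj (ρ g) * σ g = 0 := by
  have hempty : {χ : (G ⧸ N) →* ℂˣ | χ • σ = ρ} = ∅ := by
    refine Set.eq_empty_of_forall_notMem fun χ hχ => h ?_
    rw [qhatOrbit_eq_orbit, qhatOrbit_eq_orbit, eq_comm, MulAction.orbit_eq_iff]
    exact ⟨χ, hχ⟩
  rw [finsum_coset_conj_mul hρ hσ, hempty, finsum_mem_empty, mul_zero]

lemma finsum_coset_conj_mul_self (hρ : IsIrrChar G ρ) {x : G}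
    (hx : ∀ χ ∈ MulAction.stabilizer ((G ⧸ N) →* ℂˣ) ρ, χ x = 1) :
    ∑ᶠ g ∈ coset N x, conj (ρ g) * ρ g =
      Nat.card N * Nat.card (MulAction.stabilizer ((G ⧸ N) →* ℂˣ) ρ) := by
  have hone : ∀ χ ∈ {χ : (G ⧸ N) →* ℂˣ | χ • ρ = ρ}, conj (χ x : ℂ) = 1 := fun χ hχ => by
    rw [hx χ hχ, Units.val_one, map_one]
  have hcard : ∑ᶠ χ ∈ {χ : (G ⧸ N) →* ℂˣ | χ • ρ = ρ}, (1 : ℂ) =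
      Nat.card (MulAction.stabilizer ((G ⧸ N) →* ℂˣ) ρ) := by
    rw [← Nat.cast_one, ← Nat.cast_finsum_mem (Set.toFinite _), finsum_one]
    rfl
  rw [finsum_coset_conj_mul hρ hρ, finsum_mem_congr rfl hone, hcard]

lemma natCard_stabilizer (hρ : IsIrrChar G ρ) :
    (Nat.card (MulAction.stabilizer ((G ⧸ N) →* ℂˣ) ρ) : ℂ) =
      (Nat.card N : ℂ)⁻¹ * ∑ᶠ n ∈ (N : Set G), ρ n * conj (ρ n) := by
  have hN : (Nat.card N : ℂ) ≠ 0 := NeZero.ne _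
  have hcoset : coset N 1 = N := Set.ext fun g => QuotientGroup.eq_one_iff g
  have hself := finsum_coset_conj_mul_self hρ (N := N) (x := 1) fun χ _ => map_one χ
  rw [eq_inv_mul_iff_mul_eq₀ hN, ← hself, hcoset]
  simp only [mul_comm]

lemma finsum_coset_conj_mul_finsum {U : Set (G → ℂ)} (hU : ∀ σ ∈ U, IsIrrChar G σ)
    (hinj : U.InjOn (qhatOrbit N)) {Ψ : (G → ℂ) → G → ℂ}
    (hΨ : ∀ σ ∈ U, (Ψ σ).FactorsThrough ((↑) : G → G ⧸ N)) (hρ : ρ ∈ U) (x : G) :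
    ∑ᶠ g ∈ coset N x, conj (ρ g) * ∑ᶠ σ ∈ U, Ψ σ g * σ g =
      Ψ ρ x * ∑ᶠ g ∈ coset N x, conj (ρ g) * ρ g := by
  have hUfin : U.Finite := (finite_setOf_isIrrChar G).subset hU
  calc ∑ᶠ g ∈ coset N x, conj (ρ g) * ∑ᶠ σ ∈ U, Ψ σ g * σ g
      = ∑ᶠ g ∈ coset N x, ∑ᶠ σ ∈ U, Ψ σ x * (conj (ρ g) * σ g) := by
        refine finsum_mem_congr rfl fun g hg => ?_
        rw [mul_finsum_mem' _ _ hUfin]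
        refine finsum_mem_congr rfl fun σ hσ => ?_
        rw [hΨ σ hσ hg, mul_left_comm]
    _ = ∑ᶠ σ ∈ U, Ψ σ x * ∑ᶠ g ∈ coset N x, conj (ρ g) * σ g := by
        simp only [finsum_mem_comm _ (coset N x).toFinite hUfin, mul_finsum_mem]
    _ = Ψ ρ x * ∑ᶠ g ∈ coset N x, conj (ρ g) * ρ g := by
        rw [finsum_mem_eq_finite_toFinset_sum _ hUfin]
        refine Finset.sum_eq_single_of_mem ρ (hUfin.mem_toFinset.2 hρ) fun σ hσ hne => ?_
        have hσU : σ ∈ U := hUfin.mem_toFinset.1 hσ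
        rw [finsum_coset_conj_mul_eq_zero (hU ρ hρ) (hU σ hσU) fun h => hne (hinj hσU hρ h),
          mul_zero]

end CosetPairing

lemma factorsThrough_character {k : Type*} [Field k] {N : Subgroup G} {W : FDRep k G}
    (hW : ∀ n ∈ N, W.ρ n = 1) : W.character.FactorsThrough ((↑) : G → G ⧸ N) := fun a b hab => by
  have hρ : W.ρ b = W.ρ a := by
    rw [← mul_inv_cancel_left a b, map_mul, hW _ (QuotientGroup.eq.1 hab), mul_one]
  rw [FDRep.character, FDRep.character, hρ]

theorem inversion_formula_general {G : Type} [Group G] [Finite G] (N : Subgroup G) [N.Normal]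
    [IsMulCommutative (G ⧸ N)] (q : G) {U : Set (G → ℂ)} (hU : ∀ ρ ∈ U, IsIrrChar G ρ)
    (hinj : U.InjOn (qhatOrbit N)) {Θ : G → ℂ} {Ψ : (G → ℂ) → G → ℂ}
    (hΨ : ∀ ρ ∈ U, (Ψ ρ).FactorsThrough ((↑) : G → G ⧸ N))
    (hdecomp : ∀ g, Θ g = ∑ᶠ ρ ∈ U, Ψ ρ g * ρ g) {m : (G → ℂ) → ℕ}
    (hm : ∀ ρ ∈ U, (m ρ : ℂ) =
      (Nat.card N : ℂ)⁻¹ * ∑ᶠ n ∈ (N : Set G), ρ n * conj (ρ n)) :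
    ∀ ρ ∈ U, ∀ d : ℕ, Ψ ρ (q ^ (d * m ρ)) =
      ((Nat.card N : ℂ) * m ρ)⁻¹ * ∑ᶠ g ∈ coset N (q ^ (d * m ρ)), conj (ρ g) * Θ g := by
  intro ρ hρ d
  have hcard : m ρ = Nat.card (MulAction.stabilizer ((G ⧸ N) →* ℂˣ) ρ) :=
    Nat.cast_injective ((hm ρ hρ).trans (natCard_stabilizer (hU ρ hρ)).symm)
  have hstab : ∀ χ ∈ MulAction.stabilizer ((G ⧸ N) →* ℂˣ) ρ, χ ↑(q ^ (d * m ρ)) = 1 :=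
    fun χ hχ => hcard ▸ apply_pow_mul_natCard_eq_one hχ (q : G ⧸ N) d
  have hne : (Nat.card N : ℂ) * m ρ ≠ 0 := by
    rw [hcard]
    exact mul_ne_zero (NeZero.ne _) (NeZero.ne _)
  simp only [hdecomp]
  rw [finsum_coset_conj_mul_finsum hU hinj hΨ hρ, finsum_coset_conj_mul_self (hU ρ hρ) hstab,
    ← hcard, mul_left_comm, inv_mul_cancel₀ hne, mul_one]

/-- (Inversion formula.) With `G ⧸ N` cyclic generated by `qN`, `U` a set
of orbit representatives, `Θ = ∑_{ρ ∈ U} Ψ_ρ ⊗ ρ` a character with each `Ψ_ρ` zero or a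
character trivial on `N`, and `m ρ = ⟨Res_N ρ, Res_N ρ⟩`, one has for every `ρ ∈ U`,
`d ≥ 0`: `Ψ_ρ(q^{d·m_ρ}) = (1/(#N·m_ρ)) ∑_{g ∈ q^{d·m_ρ}N} conj(ρ(g)) Θ(g)`. -/
theorem inversion_formula
    (G : Type) [Group G] [Fintype G] (N : Subgroup G) [N.Normal] (q : G)
    (hgen : ∀ x : G ⧸ N, x ∈ Subgroup.zpowers ((q : G ⧸ N)))
    (U : Set (G → ℂ))
    (hU1 : ∀ ρ ∈ U, IsIrrChar G ρ)
    (hU2 : ∀ ρ ∈ U, ∀ ρ' ∈ U, qhatOrbit N ρ = qhatOrbit N ρ' → ρ = ρ')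
    (hU3 : ∀ ρ : G → ℂ, IsIrrChar G ρ → ∃ ρ' ∈ U, ρ ∈ qhatOrbit N ρ')
    (Θ : G → ℂ) (hΘ : IsChar G Θ)
    (Ψ : (G → ℂ) → (G → ℂ))
    (hΨ : ∀ ρ ∈ U, Ψ ρ = 0 ∨
      ∃ W : FDRep ℂ G, Ψ ρ = W.character ∧ ∀ n ∈ N, W.ρ n = 1)
    (hdecomp : ∀ g : G, Θ g = ∑ᶠ ρ ∈ U, Ψ ρ g * ρ g)
    (m : (G → ℂ) → ℕ)
    (hm : ∀ ρ ∈ U, (m ρ : ℂ) =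
      (Nat.card ↥N : ℂ)⁻¹ * ∑ᶠ n ∈ (N : Set G), ρ n * (starRingEnd ℂ) (ρ n)) :
    ∀ ρ ∈ U, ∀ d : ℕ,
      Ψ ρ (q ^ (d * m ρ)) =
        ((Nat.card ↥N : ℂ) * (m ρ : ℂ))⁻¹ *
          ∑ᶠ g ∈ coset N (q ^ (d * m ρ)), (starRingEnd ℂ) (ρ g) * Θ g := by
  have : IsCyclic (G ⧸ N) := ⟨q, hgen⟩
  exact inversion_formula_general N q hU1 (fun ρ hρ σ hσ => hU2 ρ hρ σ hσ)
    (fun ρ hρ => (hΨ ρ hρ).elim (fun h => h ▸ fun _ _ _ => rfl)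
      fun ⟨_, hW, htriv⟩ => hW ▸ factorsThrough_character htriv) hdecomp hm
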